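/- Let 1 < α ≤ 2, let V : ℤ → ℂ be absolutely summable, and let θ ∈ ℝ. Then for each j ∈ ℤ the convolution (c^α * V)_j = ∑_{l∈ℤ} c^α_l V_{j−l} converges absolutely, the family ((c^α * V)_j e^{−i j θ})_{j∈ℤ} is absolutely summable, and ∑_{j∈ℤ} (∑_{l∈ℤ} c^α_l V_{j−l}) e^{−i j θ} = |2 sin(θ/2)|^α · ∑_{j∈ℤ} V_j e^{−i j θ}. -/

import Mathlib

/-- Fractional centered-difference coefficients
`c^α_s = (-1)^s Γ(α+1) / (Γ(α/2 − s + 1) · Γ(α/2 + s + 1))`.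
(In Lean, division by zero is zero, matching the stated convention.) -/
noncomputable def cCoef (α : ℝ) (s : ℤ) : ℝ :=
  ((-1 : ℝ) ^ s) * Real.Gamma (α + 1) /
    (Real.Gamma (α / 2 - s + 1) * Real.Gamma (α / 2 + s + 1))

open intervalIntegral

/-- The coefficients satisfy a two-term recurrence, including at the poles of `Γ`. -/
lemma cCoef_succ (α : ℝ) (s : ℤ) :
    (α / 2 + s + 1) * cCoef α (s + 1) = (s - α / 2) * cCoef α s := by
  have e1 : α / 2 - ((s + 1 : ℤ) : ℝ) + 1 = α / 2 - s := by push_cast; ring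
  have e2 : α / 2 + ((s + 1 : ℤ) : ℝ) + 1 = (α / 2 + s + 1) + 1 := by push_cast; ring
  unfold cCoef
  rw [e1, e2, zpow_add_one₀ (by norm_num)]
  by_cases h1 : α / 2 - s = 0
  · have h1' : (s : ℝ) - α / 2 = 0 := by linarith
    simp [h1, h1', Real.Gamma_zero]
  by_cases h2 : α / 2 + s + 1 = 0
  · simp [h2, Real.Gamma_zero]
  rw [Real.Gamma_add_one h1, Real.Gamma_add_one h2]
  rw [← neg_sub (α / 2) (s : ℝ)]
  generalize Real.Gamma (α / 2 - s) = A
  generalize Real.Gamma (α / 2 + s + 1) = B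
  generalize α / 2 - s = p at h1 ⊢
  generalize α / 2 + s + 1 = q at h2 ⊢
  field_simp

lemma cCoef_neg (α : ℝ) (s : ℤ) : cCoef α (-s) = cCoef α s := by
  unfold cCoef
  rw [zpow_neg, ← inv_zpow, mul_comm (Real.Gamma (α / 2 - s + 1)), inv_neg_one, Int.cast_neg,
    sub_neg_eq_add, ← sub_eq_add_neg]

/-- A real sequence solving the recurrence of the coefficients is absolutely summable. -/
lemma summable_abs_of_recurrence {b : ℝ} (hb : 0 < b) (hb1 : b ≤ 1) {u : ℕ → ℝ}
    (hu : ∀ n : ℕ, (b + n + 1) * u (n + 1) = (n - b) * u n) : Summable fun n => |u n| := by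
  rw [← summable_nat_add_iff 1]
  refine summable_of_sum_range_le (c := |u 1| / b) (fun n => abs_nonneg _) fun n => ?_
  have key : ∀ k : ℕ, (b + (k + 1 : ℝ) + 1) * |u (k + 1 + 1)| = ((k + 1 : ℝ) - b) * |u (k + 1)| := by
    intro k
    have h := congrArg abs (hu (k + 1))
    push_cast at h
    have hk : (0 : ℝ) ≤ k := k.cast_nonneg
    rwa [abs_mul, abs_mul, abs_of_nonneg (show 0 ≤ b + (k + 1 : ℝ) + 1 by positivity),
      abs_of_nonneg (show 0 ≤ (k + 1 : ℝ) - b by linarith)] at h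
  have : ∀ m : ℕ, b * ∑ i ∈ Finset.range m, |u (i + 1)| + (m + 1) * |u (m + 1)| ≤ |u 1| := by
    intro m
    induction m with
    | zero => simp
    | succ k ih =>
      rw [Finset.sum_range_succ]
      push_cast
      have := key k
      have := mul_nonneg hb.le (abs_nonneg (u (k + 1 + 1)))
      nlinarith
  rw [le_div_iff₀ hb]
  have h1 := this n
  have : 0 ≤ (n + 1 : ℝ) * |u (n + 1)| := by positivity
  linarith

lemma summable_abs_cCoef {α : ℝ} (hα : 0 < α) (hα₂ : α ≤ 2) :
    Summable fun s : ℤ => |cCoef α s| := by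
  have h : Summable fun n : ℕ => |cCoef α n| :=
    summable_abs_of_recurrence (b := α / 2) (by linarith) (by linarith)
      fun n => by simpa using cCoef_succ α n
  exact Summable.of_nat_of_neg h (by simpa only [cCoef_neg] using h)

/-- The symmetric Beta integral. -/
lemma integral_mul_one_sub_rpow {u : ℝ} (hu : 0 < u) :
    ∫ x in (0 : ℝ)..1, (x * (1 - x)) ^ (u - 1) = Real.Gamma u ^ 2 / Real.Gamma (2 * u) := by
  have h := Complex.Gamma_mul_Gamma_eq_betaIntegral (s := u) (t := u) (by simpa) (by simpa)
  have hB : Complex.betaIntegral u u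
      = ((∫ x in (0 : ℝ)..1, (x * (1 - x)) ^ (u - 1) : ℝ) : ℂ) := by
    rw [← intervalIntegral.integral_ofReal, Complex.betaIntegral]
    refine intervalIntegral.integral_congr fun x hx => ?_
    rw [Set.uIcc_of_le zero_le_one] at hx
    have h1 : 0 ≤ 1 - x := by linarith [hx.2]
    rw [Real.mul_rpow hx.1 h1, Complex.ofReal_mul, Complex.ofReal_cpow hx.1,
      Complex.ofReal_cpow h1]
    push_cast
    rfl
  rw [hB, ← Complex.ofReal_add, Complex.Gamma_ofReal, Complex.Gamma_ofReal] at h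
  norm_cast at h
  rw [two_mul, eq_div_iff (Real.Gamma_pos_of_pos (by linarith)).ne', sq, h, mul_comm]

lemma integral_two_sin_rpow {α : ℝ} (hα : 1 ≤ α) :
    ∫ x in (0 : ℝ)..Real.pi, (2 * Real.sin x) ^ α =
      Real.pi * Real.Gamma (α + 1) / Real.Gamma (α / 2 + 1) ^ 2 := by
  have hsub := integral_comp_mul_deriv (a := 0) (b := Real.pi)
    (f := fun x => (1 - Real.cos x) / 2) (f' := fun x => Real.sin x / 2)
    (g := fun x => (x * (1 - x)) ^ ((α + 1) / 2 - 1))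
    (fun x _ => by simpa using ((Real.hasDerivAt_cos x).const_sub 1).div_const 2)
    (by fun_prop)
    (Continuous.rpow_const (by fun_prop) fun x => Or.inr (by linarith))
  have hbeta := integral_mul_one_sub_rpow (u := (α + 1) / 2) (by linarith)
  have hint : ∀ x ∈ Set.uIcc 0 Real.pi, (2 * Real.sin x) ^ α = 4 ^ α *
      (((fun x : ℝ => (x * (1 - x)) ^ ((α + 1) / 2 - 1)) ∘ fun x => (1 - Real.cos x) / 2) x *
        (Real.sin x / 2)) := by
    intro x hx
    rw [Set.uIcc_of_le Real.pi_pos.le] at hx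
    have hs : 0 ≤ Real.sin x := Real.sin_nonneg_of_mem_Icc hx
    have e : (1 - Real.cos x) / 2 * (1 - (1 - Real.cos x) / 2) = (Real.sin x / 2) ^ (2 : ℝ) := by
      rw [Real.rpow_two]
      linear_combination (-1 / 4) * Real.sin_sq_add_cos_sq x
    simp only [Function.comp]
    rw [e, ← Real.rpow_mul (by positivity), show 2 * ((α + 1) / 2 - 1) = α - 1 by ring,
      show 2 * Real.sin x = 4 * (Real.sin x / 2) by ring,
      Real.mul_rpow (by norm_num) (by positivity)]
    congr 1
    rcases hs.eq_or_lt with h0 | h0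
    · simp [← h0, Real.zero_rpow (show α ≠ 0 by linarith)]
    · rw [Real.rpow_sub_one (by positivity)]
      field_simp
  rw [intervalIntegral.integral_congr hint, intervalIntegral.integral_const_mul, hsub]
  simp only [Real.cos_zero, Real.cos_pi, sub_self, zero_div]
  rw [show (1 - (-1 : ℝ)) / 2 = 1 by norm_num, hbeta, show 2 * ((α + 1) / 2) = α + 1 by ring]
  have hdup := Real.Gamma_mul_Gamma_add_half ((α + 1) / 2)
  rw [show (α + 1) / 2 + 1 / 2 = α / 2 + 1 by ring, show 2 * ((α + 1) / 2) = α + 1 by ring,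
    show 1 - (α + 1) = -α by ring, Real.rpow_neg (by norm_num)] at hdup
  have g1 : 0 < Real.Gamma (α + 1) := Real.Gamma_pos_of_pos (by linarith)
  have g2 : 0 < Real.Gamma (α / 2 + 1) := Real.Gamma_pos_of_pos (by linarith)
  have h4 : (4 : ℝ) ^ α = (2 ^ α) ^ 2 := by
    rw [show (4 : ℝ) = 2 * 2 by norm_num, Real.mul_rpow (by norm_num) (by norm_num), sq]
  have h2 : (0 : ℝ) < 2 ^ α := by positivity
  have hpi := Real.sq_sqrt Real.pi_pos.le
  rw [h4, ← hpi]
  have hdup' : 2 ^ α * Real.Gamma ((α + 1) / 2) * Real.Gamma (α / 2 + 1)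
      = Real.Gamma (α + 1) * √Real.pi := by
    rw [mul_assoc, hdup]
    field_simp
  rw [← mul_div_assoc, div_eq_div_iff g1.ne' (by positivity)]
  calc _ = (2 ^ α * Real.Gamma ((α + 1) / 2) * Real.Gamma (α / 2 + 1)) ^ 2 := by ring
    _ = _ := by
      rw [hdup']
      ring

/-- Integration by parts: the Fourier integrals obey the recurrence of the coefficients. -/
lemma fourier_integral_succ {α : ℝ} (hα : 0 < α) (s : ℤ) :
    ((α / 2 + s + 1 : ℝ) : ℂ) * (∫ x in (0 : ℝ)..2 * Real.pi,
        (((2 * Real.sin (x / 2)) ^ α : ℝ) : ℂ) * Complex.exp (-Complex.I * (s + 1 : ℤ) * x)) =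
      ((s - α / 2 : ℝ) : ℂ) * ∫ x in (0 : ℝ)..2 * Real.pi,
        (((2 * Real.sin (x / 2)) ^ α : ℝ) : ℂ) * Complex.exp (-Complex.I * s * x) := by
  have hc : Continuous fun x : ℝ => (((2 * Real.sin (x / 2)) ^ α : ℝ) : ℂ) :=
    Complex.continuous_ofReal.comp
      (Continuous.rpow_const (by fun_prop) fun x => Or.inr hα.le)
  have hexp : ∀ (k : ℤ) (x : ℝ), HasDerivAt (fun x : ℝ => Complex.exp (-Complex.I * k * x))
      (Complex.exp (-Complex.I * k * x) * (-Complex.I * k)) x := fun k x => by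
    simpa using (((hasDerivAt_id x).ofReal_comp).const_mul (-Complex.I * k)).cexp
  have hFTC := integral_eq_sub_of_hasDerivAt_of_le (a := 0) (b := 2 * Real.pi)
    (f := fun x : ℝ => (((2 * Real.sin (x / 2)) ^ α : ℝ) : ℂ) *
      (Complex.exp (-Complex.I * s * x) - Complex.exp (-Complex.I * (s + 1 : ℤ) * x)))
    (f' := fun x : ℝ => Complex.I * (((α / 2 + s + 1 : ℝ) : ℂ) *
        ((((2 * Real.sin (x / 2)) ^ α : ℝ) : ℂ) * Complex.exp (-Complex.I * (s + 1 : ℤ) * x)) -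
      ((s - α / 2 : ℝ) : ℂ) *
        ((((2 * Real.sin (x / 2)) ^ α : ℝ) : ℂ) * Complex.exp (-Complex.I * s * x))))
    (by positivity) (hc.mul (by fun_prop)).continuousOn ?_
    (Continuous.intervalIntegrable (by fun_prop) _ _)
  · rw [intervalIntegral.integral_const_mul, intervalIntegral.integral_sub
      ((by fun_prop : Continuous _).intervalIntegrable _ _)
      ((by fun_prop : Continuous _).intervalIntegrable _ _),
      intervalIntegral.integral_const_mul, intervalIntegral.integral_const_mul] at hFTC
    have h0 : (0 : ℝ) ^ α = 0 := Real.zero_rpow hα.ne'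
    simp only [zero_div, Real.sin_zero, mul_div_cancel_left₀ Real.pi (two_ne_zero),
      Real.sin_pi, mul_zero, h0, Complex.ofReal_zero, zero_mul, sub_self, mul_eq_zero,
      Complex.I_ne_zero, false_or] at hFTC
    exact sub_eq_zero.mp hFTC
  · intro x hx
    have hs : 0 < Real.sin (x / 2) :=
      Real.sin_pos_of_pos_of_lt_pi (by linarith [hx.1]) (by linarith [hx.2])
    have hd : HasDerivAt (fun x : ℝ => (2 * Real.sin (x / 2)) ^ α)
        (Real.cos (x / 2) * α * (2 * Real.sin (x / 2)) ^ (α - 1)) x := by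
      have h1 : HasDerivAt (fun x : ℝ => 2 * Real.sin (x / 2)) (Real.cos (x / 2)) x := by
        have := (((hasDerivAt_id x).div_const 2).sin).const_mul 2
        refine this.congr_deriv ?_
        simp only [id]
        ring
      exact h1.rpow_const (Or.inl (by positivity))
    refine (hd.ofReal_comp.mul ((hexp s x).sub (hexp (s + 1) x))).congr_deriv ?_
    have hp : (2 * Real.sin (x / 2)) ^ α =
        (2 * Real.sin (x / 2)) ^ (α - 1) * (2 * Real.sin (x / 2)) := by
      rw [Real.rpow_sub_one (by positivity)]
      field_simp
    have he : Complex.exp (-Complex.I * (s + 1 : ℤ) * x) = Complex.exp (-Complex.I * s * x) *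
        (Complex.cos (x / 2) - Complex.I * Complex.sin (x / 2)) ^ 2 := by
      have : Complex.cos (x / 2) - Complex.I * Complex.sin (x / 2)
          = Complex.exp (-(x / 2) * Complex.I) := by
        rw [Complex.exp_mul_I, Complex.cos_neg, Complex.sin_neg]
        ring
      rw [this, ← Complex.exp_nat_mul, ← Complex.exp_add]
      congr 1
      push_cast
      ring
    rw [Pi.sub_apply, hp, he]
    push_cast
    have hsc := Complex.sin_sq_add_cos_sq (x / 2 : ℂ)
    generalize Complex.sin (x / 2 : ℂ) = S at *
    generalize Complex.cos (x / 2 : ℂ) = C at *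
    generalize Complex.exp (-Complex.I * s * x) = E
    generalize (((2 * Real.sin (x / 2)) ^ (α - 1) : ℝ) : ℂ) = P
    have key : C * (1 - (C - Complex.I * S) ^ 2) =
        Complex.I * S * (1 + (C - Complex.I * S) ^ 2) := by
      linear_combination (-C + Complex.I * S) * hsc + (C * S ^ 2 - Complex.I * S ^ 3) * Complex.I_sq
    linear_combination (α * P * E) * key

lemma fourier_integral_eq {α : ℝ} (hα : 1 ≤ α) (s : ℤ) :
    ∫ x in (0 : ℝ)..2 * Real.pi,
        (((2 * Real.sin (x / 2)) ^ α : ℝ) : ℂ) * Complex.exp (-Complex.I * s * x) =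
      2 * Real.pi * cCoef α s := by
  have hrec : ∀ k : ℤ, ((α / 2 + k + 1 : ℝ) : ℂ) * cCoef α (k + 1) =
      ((k - α / 2 : ℝ) : ℂ) * cCoef α k := fun k => by exact_mod_cast cCoef_succ α k
  induction s using Int.induction_on with
  | zero =>
    have h := intervalIntegral.integral_comp_div (a := 0) (b := 2 * Real.pi)
      (fun x => (2 * Real.sin x) ^ α) (two_ne_zero)
    rw [zero_div, mul_div_cancel_left₀ _ two_ne_zero, integral_two_sin_rpow hα] at h
    simp only [Int.cast_zero, mul_zero, zero_mul, Complex.exp_zero, mul_one]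
    rw [intervalIntegral.integral_ofReal, h]
    simp [cCoef]
    ring
  | succ n ih =>
    have h := fourier_integral_succ (by linarith : 0 < α) n
    rw [ih] at h
    have hne : ((α / 2 + (n : ℤ) + 1 : ℝ) : ℂ) ≠ 0 := by
      have : 0 < α / 2 + ((n : ℤ) : ℝ) + 1 := by push_cast; positivity
      exact_mod_cast this.ne'
    apply mul_left_cancel₀ hne
    rw [h]
    linear_combination (-2 * Real.pi : ℂ) * hrec n
  | pred n ih =>
    have h := fourier_integral_succ (by linarith : 0 < α) (-n - 1)
    have h' := hrec (-n - 1)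
    rw [sub_add_cancel] at h h'
    rw [ih] at h
    have hne : (((-n - 1 : ℤ) - α / 2 : ℝ) : ℂ) ≠ 0 := by
      have : ((-n - 1 : ℤ) : ℝ) - α / 2 < 0 := by
        push_cast
        have : (0 : ℝ) ≤ n := n.cast_nonneg
        linarith
      exact_mod_cast this.ne
    apply mul_left_cancel₀ hne
    rw [← h]
    linear_combination (2 * Real.pi : ℂ) * h'

/-- The symbol of the fractional centered difference operator. -/
lemma hasSum_cCoef_mul_exp {α : ℝ} (hα : 1 ≤ α) (hα₂ : α ≤ 2) (θ : ℝ) :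
    HasSum (fun s : ℤ => (cCoef α s : ℂ) * Complex.exp (-Complex.I * s * θ))
      ((|2 * Real.sin (θ / 2)| ^ α : ℝ) : ℂ) := by
  have : Fact (0 < 2 * Real.pi) := ⟨by positivity⟩
  have hper : Function.Periodic
      (fun x : ℝ => ((|2 * Real.sin (x / 2)| ^ α : ℝ) : ℂ)) (2 * Real.pi) := fun x => by
    simp only [add_div, mul_div_cancel_left₀ Real.pi (two_ne_zero), Real.sin_add_pi,
      mul_neg, abs_neg]
  have hcont : Continuous fun x : ℝ => ((|2 * Real.sin (x / 2)| ^ α : ℝ) : ℂ) :=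
    Complex.continuous_ofReal.comp
      (Continuous.rpow_const (by fun_prop) fun x => Or.inr (by linarith))
  let f : C(AddCircle (2 * Real.pi), ℂ) := ⟨hper.lift, continuous_coinduced_dom.mpr hcont⟩
  have hf : ∀ x : ℝ, f x = ((|2 * Real.sin (x / 2)| ^ α : ℝ) : ℂ) := fun x => rfl
  have hpi : (Real.pi : ℂ) ≠ 0 := by exact_mod_cast Real.pi_ne_zero
  have hexp : ∀ (n : ℤ) (x : ℝ), fourier n (x : AddCircle (2 * Real.pi)) =
      Complex.exp (Complex.I * n * x) := fun n x => by
    rw [fourier_coe_apply]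
    congr 1
    push_cast
    field_simp
  have hcoef : ∀ n : ℤ, fourierCoeff f n = cCoef α n := fun n => by
    rw [fourierCoeff_eq_intervalIntegral _ _ 0, zero_add]
    have : ∀ x ∈ Set.uIcc 0 (2 * Real.pi), fourier (-n) (x : AddCircle (2 * Real.pi)) • f x =
        (((2 * Real.sin (x / 2)) ^ α : ℝ) : ℂ) * Complex.exp (-Complex.I * n * x) := by
      intro x hx
      rw [Set.uIcc_of_le (by positivity)] at hx
      have hs : 0 ≤ Real.sin (x / 2) :=
        Real.sin_nonneg_of_nonneg_of_le_pi (by linarith [hx.1]) (by linarith [hx.2])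
      rw [hf, hexp, abs_of_nonneg (by positivity), smul_eq_mul, mul_comm]
      push_cast
      ring_nf
    rw [intervalIntegral.integral_congr this, fourier_integral_eq hα, Complex.real_smul]
    push_cast
    field_simp
  have hsum : Summable (fourierCoeff f) := by
    rw [funext hcoef]
    exact Summable.of_norm (by simpa using summable_abs_cCoef (by linarith) hα₂)
  have h := has_pointwise_sum_fourier_series_of_summable hsum ((-θ : ℝ) : AddCircle (2 * Real.pi))
  rw [hf] at h
  simp only [hcoef, hexp, smul_eq_mul] at h
  convert h using 2
  · simp
  · simp [neg_div]

/-- The semi-discrete Fourier transform diagonalizes the fractional centered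
difference operator: for `1 < α ≤ 2`, an absolutely summable `V : ℤ → ℂ` and
`θ ∈ ℝ`, the convolution `(c^α * V)_j = ∑_l c^α_l V_{j−l}` converges absolutely
for each `j`, the family `((c^α * V)_j e^{−ijθ})_j` is absolutely summable, and
`∑_j (c^α * V)_j e^{−ijθ} = |2 sin(θ/2)|^α ∑_j V_j e^{−ijθ}`. -/
theorem fourier_diagonalizes_fractional_difference
    (α : ℝ) (hα₁ : 1 < α) (hα₂ : α ≤ 2)
    (V : ℤ → ℂ) (hV : Summable fun l : ℤ => ‖V l‖) (θ : ℝ) :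
    (∀ j : ℤ, Summable fun l : ℤ => ‖(cCoef α l : ℂ) * V (j - l)‖) ∧
    (Summable fun j : ℤ =>
      ‖(∑' l : ℤ, (cCoef α l : ℂ) * V (j - l)) * Complex.exp (-Complex.I * j * θ)‖) ∧
    (∑' j : ℤ, (∑' l : ℤ, (cCoef α l : ℂ) * V (j - l)) * Complex.exp (-Complex.I * j * θ)) =
      ((|2 * Real.sin (θ / 2)| ^ α : ℝ) : ℂ) *
        ∑' j : ℤ, V j * Complex.exp (-Complex.I * j * θ) := by
  have hnorm : ∀ k : ℤ, ‖Complex.exp (-Complex.I * k * θ)‖ = 1 := fun k => by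
    simp [Complex.norm_exp]
  have hc : Summable fun l : ℤ => ‖(cCoef α l : ℂ) * Complex.exp (-Complex.I * l * θ)‖ := by
    simpa only [norm_mul, hnorm, mul_one, Complex.norm_real, Real.norm_eq_abs] using
      summable_abs_cCoef (by linarith) hα₂
  have hv : Summable fun m : ℤ => ‖V m * Complex.exp (-Complex.I * m * θ)‖ := by
    simpa only [norm_mul, hnorm, mul_one] using hV
  let e : ℤ × ℤ ≃ ℤ × ℤ :=
    { toFun := fun p => (p.2, p.1 - p.2)
      invFun := fun q => (q.1 + q.2, q.1)
      left_inv := fun p => by simp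
      right_inv := fun q => by simp }
  have hterm : ∀ j l : ℤ, (cCoef α l : ℂ) * Complex.exp (-Complex.I * l * θ) *
      (V (j - l) * Complex.exp (-Complex.I * (j - l : ℤ) * θ)) =
      (cCoef α l : ℂ) * V (j - l) * Complex.exp (-Complex.I * j * θ) := fun j l => by
    have : Complex.exp (-Complex.I * j * θ) =
        Complex.exp (-Complex.I * l * θ) * Complex.exp (-Complex.I * (j - l : ℤ) * θ) := by
      rw [← Complex.exp_add]
      congr 1
      push_cast
      ring
    rw [this]
    ring
  have hprod : Summable fun p : ℤ × ℤ =>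
      ‖(cCoef α p.2 : ℂ) * V (p.1 - p.2) * Complex.exp (-Complex.I * p.1 * θ)‖ := by
    have h := e.summable_iff.mpr (hc.mul_norm hv)
    refine h.congr fun p => ?_
    simp only [Function.comp, e, Equiv.coe_fn_mk, hterm]
  have hrow : ∀ j : ℤ, Summable fun l : ℤ => ‖(cCoef α l : ℂ) * V (j - l)‖ := fun j => by
    simpa only [norm_mul _ (Complex.exp _), hnorm, mul_one] using hprod.prod_factor j
  refine ⟨hrow, ?_, ?_⟩
  · refine Summable.of_nonneg_of_le (fun _ => norm_nonneg _) (fun j => ?_) hprod.prod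
    simp only [norm_mul _ (Complex.exp _), hnorm, mul_one]
    exact norm_tsum_le_tsum_norm (hrow j)
  · rw [← (hasSum_cCoef_mul_exp hα₁.le hα₂ θ).tsum_eq, tsum_mul_tsum_of_summable_norm hc hv,
      ← e.tsum_eq]
    simp only [e, Equiv.coe_fn_mk, hterm]
    rw [hprod.of_norm.tsum_prod]
    simp only [tsum_mul_right]
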